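/- Let I be a common independent set of matroids M₁ and M₂ on a common finite ground set S. Then I has maximum cardinality among all common independent sets of M₁ and M₂ if and only if there is no directed path from a vertex of X₁ to a vertex of X₂ in the exchange graph 𝓔(M₁,M₂,I). -/

import Mathlib

/-- `I` is a common independent set of the matroids `M₁` and `M₂`. -/
def CommonIndep {α : Type*} (M₁ M₂ : Matroid α) (I : Finset α) : Prop :=
  M₁.Indep ↑I ∧ M₂.Indep ↑I

/-- Adjacency in the exchange graph `𝓔(M₁,M₂,I)`: for `y ∈ I` and `x ∉ I` there is an
edge `(y,x)` iff `(I \ {y}) ∪ {x} ∈ 𝓘₁`, and an edge `(x,y)` iff `(I \ {y}) ∪ {x} ∈ 𝓘₂`. -/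
def ExchAdj {α : Type*} [DecidableEq α] (M₁ M₂ : Matroid α) (I : Finset α) (u v : α) : Prop :=
  (u ∈ I ∧ v ∉ I ∧ M₁.Indep ↑(insert v (I.erase u))) ∨
  (u ∉ I ∧ v ∈ I ∧ M₂.Indep ↑(insert u (I.erase v)))

/-- `x ∈ X₁`, i.e. `x ∉ I` and `I ∪ {x} ∈ 𝓘₁` (and analogously for `X₂` with `M₂`). -/
def memX {α : Type*} [DecidableEq α] (M : Matroid α) (I : Finset α) (x : α) : Prop :=
  x ∉ I ∧ M.Indep ↑(insert x I)

/-!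
Maximality is certified by a set `R` that splits every common independent set `J`: if `J ∩ R` lies
in the `M₂`-closure of `I ∩ R` and `J \ R` in the `M₁`-closure of `I \ R`, then `|J| ≤ |I|`. When
no path leads from `X₁` to `X₂`, the set of vertices reachable from `X₁` is such a certificate.

Conversely, let `P` be the vertex set of a shortest path from `X₁` to `X₂` and `J = I ∆ P`. Since
the path has no shortcuts, going back along it recovers the elements of `I ∩ P` one at a time in
the `M₁`-closure of `J`, so `J` spans `I` together with the first vertex of the path. As
`|J| ≤ |I| + 1`, this forces `J` to be `M₁`-independent with `|J| = |I| + 1`. Reversing the path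
exchanges the roles of `M₁` and `M₂`.
-/

open scoped symmDiff

section Closure

variable {α : Type*} {M M₁ M₂ : Matroid α} {I J R S : Set α} {x y : α}

lemma encard_le_encard_of_indep_of_subset_closure (hJ : M.Indep J) (h : J ⊆ M.closure I) :
    J.encard ≤ I.encard :=
  (hJ.encard_le_eRk_of_subset h).trans ((M.eRk_closure_eq I).trans_le (M.eRk_le_encard I))

lemma indep_of_subset_closure_of_encard_le (hJ : J.Finite) (hI : M.Indep I)
    (h : I ⊆ M.closure J) (hcard : J.encard ≤ I.encard) : M.Indep J :=
  (M.isRkFinite_of_finite hJ).indep_of_encard_le_eRk <|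
    hcard.trans ((hI.encard_le_eRk_of_subset h).trans_eq (M.eRk_closure_eq J))

lemma encard_le_encard_of_split (hJ₁ : M₁.Indep J) (hJ₂ : M₂.Indep J)
    (h₁ : J \ R ⊆ M₁.closure (I \ R)) (h₂ : J ∩ R ⊆ M₂.closure (I ∩ R)) :
    J.encard ≤ I.encard := by
  rw [← Set.encard_sdiff_add_encard_inter J R, ← Set.encard_sdiff_add_encard_inter I R]
  exact add_le_add
    (encard_le_encard_of_indep_of_subset_closure (hJ₁.subset Set.sdiff_subset) h₁)
    (encard_le_encard_of_indep_of_subset_closure (hJ₂.subset Set.inter_subset_left) h₂)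

lemma mem_closure_of_insert_not_indep (hI : M.Indep I) (hxE : x ∈ M.E)
    (hx : ¬ M.Indep (insert x I)) : x ∈ M.closure I :=
  hI.mem_closure_iff'.2 ⟨hxE, fun h => absurd h hx⟩

lemma mem_fundCircuit_iff_indep_exchange (hI : M.Indep I) (hx : x ∈ M.closure I) (hxI : x ∉ I)
    (hy : y ∈ I) : y ∈ M.fundCircuit x I ↔ M.Indep (insert x (I \ {y})) := by
  have hxy : x ∉ ({y} : Set α) := fun h => hxI (Set.mem_singleton_iff.1 h ▸ hy)
  rw [hI.mem_fundCircuit_iff hx hxI, Set.insert_sdiff_of_notMem I hxy]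

lemma inter_ground_subset_closure_of_exchange_closed (hI : M.Indep I)
    (hS : ∀ x ∈ S \ I, ¬ M.Indep (insert x I))
    (hexch : ∀ x ∈ S \ I, ∀ y ∈ I, M.Indep (insert x (I \ {y})) → y ∈ S) :
    S ∩ M.E ⊆ M.closure (I ∩ S) := by
  rintro x ⟨hxS, hxE⟩
  by_cases hxI : x ∈ I
  · exact M.mem_closure_of_mem' ⟨hxI, hxS⟩ hxE
  have hx : x ∈ M.closure I := mem_closure_of_insert_not_indep hI hxE (hS x ⟨hxS, hxI⟩)
  have hcircuit : M.fundCircuit x I \ {x} ⊆ I ∩ S := by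
    rintro y ⟨hy, hyx⟩
    have hyI : y ∈ I := (M.fundCircuit_subset_insert x I hy).resolve_left hyx
    exact ⟨hyI, hexch x ⟨hxS, hxI⟩ y hyI
      ((mem_fundCircuit_iff_indep_exchange hI hx hxI hyI).1 hy)⟩
  exact M.closure_subset_closure hcircuit <|
    (hI.fundCircuit_isCircuit hx hxI).mem_closure_sdiff_singleton_of_mem (M.mem_fundCircuit x I)

lemma subset_closure_of_ordered_exchange {β : Type*} [Preorder β] (φ : α → β) (hI : M.Indep I)
    (hfin : (I \ J).Finite)
    (hexch : ∀ y ∈ I \ J, ∃ x ∈ J \ I, ¬ M.Indep (insert x I) ∧ M.Indep (insert x (I \ {y})) ∧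
      ∀ z ∈ I \ J, M.Indep (insert x (I \ {z})) → z = y ∨ φ z < φ y) :
    I ⊆ M.closure J := by
  by_contra hsub
  obtain ⟨y₀, hy₀I, hy₀⟩ := Set.not_subset.1 hsub
  have mem_of_mem_J {a : α} (ha : a ∈ J) (haE : a ∈ M.E) : a ∈ M.closure J :=
    M.mem_closure_of_mem' ha haE
  have notMem_J {a : α} (ha : a ∈ I \ M.closure J) : a ∈ I \ J :=
    ⟨ha.1, fun haJ => ha.2 (mem_of_mem_J haJ (hI.subset_ground ha.1))⟩
  obtain ⟨y, hy, hmin⟩ := Set.Finite.exists_minimalFor φ (I \ M.closure J)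
    (hfin.subset fun _ => notMem_J) ⟨y₀, hy₀I, hy₀⟩
  obtain ⟨x, ⟨hxJ, hxI⟩, hxdep, hxy, hlt⟩ := hexch y (notMem_J hy)
  have hxE : x ∈ M.E := hxy.subset_ground (Set.mem_insert x _)
  have hx : x ∈ M.closure I := mem_closure_of_insert_not_indep hI hxE hxdep
  have hcircuit : M.fundCircuit x I \ {y} ⊆ M.closure J := by
    rintro z ⟨hz, hzy⟩
    rcases M.fundCircuit_subset_insert x I hz with rfl | hzI
    · exact mem_of_mem_J hxJ hxE
    by_contra hzJ
    have hzlt : φ z < φ y := (hlt z (notMem_J ⟨hzI, hzJ⟩)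
      ((mem_fundCircuit_iff_indep_exchange hI hx hxI hzI).1 hz)).resolve_left hzy
    exact hzlt.not_ge (hmin ⟨hzI, hzJ⟩ hzlt.le)
  exact hy.2 <| M.closure_subset_closure_of_subset_closure hcircuit <|
    (hI.fundCircuit_isCircuit hx hxI).mem_closure_sdiff_singleton_of_mem
      ((mem_fundCircuit_iff_indep_exchange hI hx hxI hy.1).2 hxy)

end Closure

section Walk

variable {α : Type*} {r : α → α → Prop} {s t : α → Prop} {l : List α} {i j : ℕ}

/-- `l` lists the vertices of a directed walk in the digraph with adjacency relation `r`, from a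
vertex satisfying `s` to a vertex satisfying `t`. -/
structure IsWalkBetween (r : α → α → Prop) (s t : α → Prop) (l : List α) : Prop where
  ne_nil : l ≠ []
  isChain : l.IsChain r
  source : s (l.head ne_nil)
  target : t (l.getLast ne_nil)

/-- A directed walk from `s` to `t` with the smallest number of vertices. -/
def IsShortestWalk (r : α → α → Prop) (s t : α → Prop) (l : List α) : Prop :=
  MinimalFor (IsWalkBetween r s t) List.length l

namespace IsWalkBetween

lemma exists_of_reflTransGen {a b : α} (ha : s a) (hab : Relation.ReflTransGen r a b) (hb : t b) :
    ∃ l, IsWalkBetween r s t l := by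
  obtain ⟨l, hl, hlast⟩ := List.exists_isChain_cons_of_relationReflTransGen hab
  exact ⟨a :: l, List.cons_ne_nil a l, hl, ha, hlast.symm ▸ hb⟩

lemma exists_isShortestWalk (h : IsWalkBetween r s t l) : ∃ l', IsShortestWalk r s t l' :=
  exists_minimalFor_of_wellFoundedLT _ _ ⟨l, h⟩

lemma reverse (h : IsWalkBetween r s t l) : IsWalkBetween (flip r) t s l.reverse where
  ne_nil := List.reverse_ne_nil_iff.2 h.ne_nil
  isChain := List.isChain_reverse.2 h.isChain
  source := by simpa only [List.head_reverse] using h.target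
  target := by simpa only [List.getLast_reverse] using h.source

lemma drop (h : IsWalkBetween r s t l) (hi : i < l.length) (hs : s l[i]) :
    IsWalkBetween r s t (l.drop i) where
  ne_nil := by simpa using hi
  isChain := h.isChain.drop i
  source := by simpa only [List.head_drop] using hs
  target := by simpa only [List.getLast_drop] using h.target

lemma take (h : IsWalkBetween r s t l) (hi : i < l.length) (ht : t l[i]) :
    IsWalkBetween r s t (l.take (i + 1)) where
  ne_nil := by simp [h.ne_nil]
  isChain := h.isChain.take (i + 1)
  source := by simpa only [List.head_take] using h.source
  target := by simpa [List.getLast_take, hi] using ht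

lemma shortcut (h : IsWalkBetween r s t l) (hi : i < l.length) (hj : j < l.length)
    (hadj : r l[i] l[j]) : IsWalkBetween r s t (l.take (i + 1) ++ l.drop j) where
  ne_nil := by simp [h.ne_nil]
  isChain := by
    refine List.isChain_append.2 ⟨h.isChain.take (i + 1), h.isChain.drop j, ?_⟩
    simpa [List.getLast?_take, hi, hj] using hadj
  source := by simpa [List.head_append, List.head_take, h.ne_nil] using h.source
  target := by simpa [List.getLast_append, hj] using h.target

end IsWalkBetween

namespace IsShortestWalk

lemma isWalkBetween (h : IsShortestWalk r s t l) : IsWalkBetween r s t l := h.1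

lemma length_le {l' : List α} (h : IsShortestWalk r s t l) (h' : IsWalkBetween r s t l') :
    l.length ≤ l'.length :=
  not_lt.1 (h.not_lt h')

lemma reverse (h : IsShortestWalk r s t l) : IsShortestWalk (flip r) t s l.reverse :=
  ⟨h.isWalkBetween.reverse, fun l' hl' _ => by
    simpa only [List.length_reverse] using h.length_le hl'.reverse⟩

lemma eq_zero_of_source (h : IsShortestWalk r s t l) (hi : i < l.length) (hs : s l[i]) :
    i = 0 := by
  have := h.length_le (h.isWalkBetween.drop hi hs)
  grind

lemma add_one_eq_length_of_target (h : IsShortestWalk r s t l) (hi : i < l.length)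
    (ht : t l[i]) : i + 1 = l.length := by
  have := h.length_le (h.isWalkBetween.take hi ht)
  grind

lemma le_add_one_of_adj (h : IsShortestWalk r s t l) (hi : i < l.length) (hj : j < l.length)
    (hadj : r l[i] l[j]) : j ≤ i + 1 := by
  have := h.length_le (h.isWalkBetween.shortcut hi hj hadj)
  grind

lemma nodup (h : IsShortestWalk r s t l) : l.Nodup := by
  refine List.pairwise_iff_getElem.2 fun i j hi hj hij heq => ?_
  rcases (Nat.succ_le_of_lt hj).eq_or_lt with hlast | hnext
  · have ht : t l[j] := by
      simpa only [List.getLast_eq_getElem, ← hlast, Nat.succ_eq_add_one, Nat.add_sub_cancel]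
        using h.isWalkBetween.target
    have := h.add_one_eq_length_of_target hi (heq ▸ ht)
    omega
  · have hadj : r l[i] l[j + 1] := heq ▸ h.isWalkBetween.isChain.getElem j hnext
    have := h.le_add_one_of_adj hi hnext hadj
    omega

end IsShortestWalk

lemma countP_le_countP_not_add_one_of_alternating {p : α → Bool}
    (h : l.IsChain fun a b => p a ≠ p b) : l.countP p ≤ l.countP (fun a => !p a) + 1 := by
  induction l using List.twoStepInduction with
  | nil => simp
  | singleton a => grind
  | cons_cons a b l ih _ =>
    have hab : p a ≠ p b := (List.isChain_cons_cons.1 h).1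
    have hl : l.countP p ≤ l.countP (fun a => !p a) + 1 := ih h.tail.tail
    grind

lemma card_symmDiff_toFinset_le_of_alternating [DecidableEq α] {I : Finset α} (hl : l.Nodup)
    (h : l.IsChain fun a b => a ∈ I ↔ b ∉ I) : (I ∆ l.toFinset).card ≤ I.card + 1 := by
  have houtside : (l.toFinset \ I).card ≤ l.countP (· ∉ I) := by
    rw [List.countP_eq_length_filter]
    refine le_of_eq_of_le (congrArg Finset.card ?_) (List.toFinset_card_le _)
    ext; simp
  have hinside : l.countP (· ∈ I) = (I ∩ l.toFinset).card := by
    rw [List.countP_eq_length_filter, ← List.toFinset_card_of_nodup (hl.filter _)]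
    congr 1; ext; simp [and_comm]
  have hcount : l.countP (· ∉ I) ≤ l.countP (· ∈ I) + 1 := by
    simpa using countP_le_countP_not_add_one_of_alternating (p := (· ∉ I)) (l := l)
      (h.imp fun a b hab => by grind)
  calc (I ∆ l.toFinset).card
      ≤ (I \ l.toFinset).card + (l.toFinset \ I).card := Finset.card_union_le _ _
    _ ≤ (I \ l.toFinset).card + ((I ∩ l.toFinset).card + 1) := by omega
    _ = I.card + 1 := by rw [← add_assoc, Finset.card_sdiff_add_card_inter]

end Walk

section ExchangeGraph

variable {α : Type*} [DecidableEq α] {M M₁ M₂ : Matroid α} {I J : Finset α} {x y : α}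

lemma memX_iff (hx : x ∉ I) : memX M I x ↔ M.Indep (insert x (I : Set α)) := by
  simp [memX, hx]

lemma exchAdj_iff_of_mem (hy : y ∈ I) :
    ExchAdj M₁ M₂ I y x ↔ x ∉ I ∧ M₁.Indep (insert x ((I : Set α) \ {y})) := by
  simp [ExchAdj, hy]

lemma exchAdj_swap : ExchAdj M₂ M₁ I x y ↔ ExchAdj M₁ M₂ I y x := by
  unfold ExchAdj; tauto

lemma ExchAdj.mem_iff_notMem (h : ExchAdj M₁ M₂ I x y) : x ∈ I ↔ y ∉ I := by
  unfold ExchAdj at h; tauto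

/-- A path from `X₁` to `X₂` in the exchange graph with the smallest number of vertices, along
which `I` is augmented. -/
def IsShortestAugmentingPath (M₁ M₂ : Matroid α) (I : Finset α) (l : List α) : Prop :=
  IsShortestWalk (ExchAdj M₁ M₂ I) (memX M₁ I) (memX M₂ I) l

namespace IsShortestAugmentingPath

variable {l : List α}

lemma reverse (h : IsShortestAugmentingPath M₁ M₂ I l) :
    IsShortestAugmentingPath M₂ M₁ I l.reverse := by
  have hflip : flip (ExchAdj M₁ M₂ I) = ExchAdj M₂ M₁ I := by
    ext x y; exact exchAdj_swap.symm
  simpa only [IsShortestAugmentingPath, hflip] using IsShortestWalk.reverse h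

lemma card_symmDiff_le (h : IsShortestAugmentingPath M₁ M₂ I l) :
    (I ∆ l.toFinset).card ≤ I.card + 1 :=
  card_symmDiff_toFinset_le_of_alternating h.nodup
    (h.isWalkBetween.isChain.imp fun _ _ => ExchAdj.mem_iff_notMem)

lemma subset_closure_symmDiff (h : IsShortestAugmentingPath M₁ M₂ I l) (hI : M₁.Indep I) :
    (I : Set α) ⊆ M₁.closure ↑(I ∆ l.toFinset) := by
  have mem_inter {y : α} (hy : y ∈ (I : Set α) \ ↑(I ∆ l.toFinset)) : y ∈ I ∧ y ∈ l := by
    simpa [Finset.mem_symmDiff] using hy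
  have hidx (k : ℕ) (hk : k < l.length) : l.idxOf l[k] = k := h.nodup.idxOf_getElem k hk
  refine subset_closure_of_ordered_exchange (fun y => OrderDual.toDual (l.idxOf y)) hI
    (I.finite_toSet.subset Set.sdiff_subset) fun y hy => ?_
  obtain ⟨hyI, hyl⟩ := mem_inter hy
  obtain ⟨i, hi, rfl⟩ := List.getElem_of_mem hyl
  have hnext : i + 1 < l.length := by
    refine lt_of_le_of_ne hi fun hlast => h.isWalkBetween.target.1 ?_
    simpa only [List.getLast_eq_getElem, ← hlast, Nat.add_sub_cancel] using hyI
  obtain ⟨hxI, hxy⟩ := (exchAdj_iff_of_mem hyI).1 (h.isWalkBetween.isChain.getElem i hnext)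
  have hxX : ¬ memX M₁ I l[i + 1] := fun hx => by simpa using h.eq_zero_of_source hnext hx
  have hxJ : l[i + 1] ∈ I ∆ l.toFinset :=
    Finset.mem_symmDiff.2 (Or.inr ⟨List.mem_toFinset.2 (List.getElem_mem hnext), hxI⟩)
  refine ⟨l[i + 1], ⟨hxJ, hxI⟩, (memX_iff hxI).not.1 hxX, hxy, fun z hz hxz => ?_⟩
  obtain ⟨hzI, hzl⟩ := mem_inter hz
  obtain ⟨k, hk, rfl⟩ := List.getElem_of_mem hzl
  have hik : i + 1 ≤ k + 1 :=
    h.le_add_one_of_adj hk hnext ((exchAdj_iff_of_mem hzI).2 ⟨hxI, hxz⟩)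
  rcases (Nat.le_of_succ_le_succ hik).eq_or_lt with rfl | hlt
  · exact Or.inl rfl
  · exact Or.inr (by simpa only [hidx, OrderDual.toDual_lt_toDual] using hlt)

lemma indep_symmDiff_and_card_lt (h : IsShortestAugmentingPath M₁ M₂ I l) (hI : M₁.Indep I) :
    M₁.Indep ↑(I ∆ l.toFinset) ∧ I.card < (I ∆ l.toFinset).card := by
  set a := l.head h.isWalkBetween.ne_nil
  obtain ⟨haI, ha⟩ : memX M₁ I a := h.isWalkBetween.source
  have haJ : a ∈ I ∆ l.toFinset :=
    Finset.mem_symmDiff.2 (Or.inr ⟨List.mem_toFinset.2 (List.head_mem _), haI⟩)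
  have hspan : (↑(insert a I) : Set α) ⊆ M₁.closure ↑(I ∆ l.toFinset) := by
    rw [Finset.coe_insert]
    exact Set.insert_subset
      (M₁.mem_closure_of_mem' haJ (ha.subset_ground (Finset.mem_insert_self a I)))
      (h.subset_closure_symmDiff hI)
  have hcard : (insert a I).card = I.card + 1 := Finset.card_insert_of_notMem haI
  constructor
  · refine indep_of_subset_closure_of_encard_le (Finset.finite_toSet _) ha hspan ?_
    simpa only [Set.encard_coe_eq_coe_finsetCard, hcard, Nat.cast_le] using h.card_symmDiff_le
  · simpa only [Set.encard_coe_eq_coe_finsetCard, hcard, Nat.cast_le, Nat.add_one_le_iff]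
      using encard_le_encard_of_indep_of_subset_closure ha hspan

lemma commonIndep_symmDiff (h : IsShortestAugmentingPath M₁ M₂ I l) (hI : CommonIndep M₁ M₂ I) :
    CommonIndep M₁ M₂ (I ∆ l.toFinset) :=
  ⟨(h.indep_symmDiff_and_card_lt hI.1).1, by
    simpa only [List.toFinset_reverse] using (h.reverse.indep_symmDiff_and_card_lt hI.2).1⟩

end IsShortestAugmentingPath

lemma card_le_card_of_adj_closed (hI : CommonIndep M₁ M₂ I) (hJ : CommonIndep M₁ M₂ J)
    {R : Set α} (hX₁ : ∀ x, memX M₁ I x → x ∈ R) (hX₂ : ∀ x ∈ R, ¬ memX M₂ I x)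
    (hadj : ∀ x ∈ R, ∀ y, ExchAdj M₁ M₂ I x y → y ∈ R) : J.card ≤ I.card := by
  have h₁ : Rᶜ ∩ M₁.E ⊆ M₁.closure (I ∩ Rᶜ) := by
    refine inter_ground_subset_closure_of_exchange_closed hI.1 ?_ ?_
    · exact fun x ⟨hxR, hxI⟩ hx => hxR (hX₁ x ((memX_iff hxI).2 hx))
    · exact fun x ⟨hxR, hxI⟩ y hyI hxy hyR =>
        hxR (hadj y hyR x ((exchAdj_iff_of_mem hyI).2 ⟨hxI, hxy⟩))
  have h₂ : R ∩ M₂.E ⊆ M₂.closure (I ∩ R) := by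
    refine inter_ground_subset_closure_of_exchange_closed hI.2 ?_ ?_
    · exact fun x ⟨hxR, hxI⟩ hx => hX₂ x hxR ((memX_iff hxI).2 hx)
    · exact fun x ⟨hxR, hxI⟩ y hyI hxy =>
        hadj x hxR y (exchAdj_swap.1 ((exchAdj_iff_of_mem hyI).2 ⟨hxI, hxy⟩))
  have hle : (J : Set α).encard ≤ (I : Set α).encard :=
    encard_le_encard_of_split hJ.1 hJ.2
      (fun x hx => h₁ ⟨hx.2, hJ.1.subset_ground hx.1⟩)
      (fun x hx => h₂ ⟨hx.2, hJ.2.subset_ground hx.1⟩)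
  simpa only [Set.encard_coe_eq_coe_finsetCard, Nat.cast_le] using hle

lemma card_le_card_of_no_walk (hI : CommonIndep M₁ M₂ I) (hJ : CommonIndep M₁ M₂ J)
    (h : ¬ ∃ l, IsWalkBetween (ExchAdj M₁ M₂ I) (memX M₁ I) (memX M₂ I) l) :
    J.card ≤ I.card := by
  let R : Set α := {x | ∃ a, memX M₁ I a ∧ Relation.ReflTransGen (ExchAdj M₁ M₂ I) a x}
  refine card_le_card_of_adj_closed hI hJ (R := R) ?_ ?_ ?_
  · exact fun x hx => ⟨x, hx, .refl⟩
  · exact fun x ⟨a, ha, hax⟩ hx => h (IsWalkBetween.exists_of_reflTransGen ha hax hx)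
  · exact fun x ⟨a, ha, hax⟩ y hxy => ⟨a, ha, hax.tail hxy⟩

theorem maxCard_iff_no_X1X2_path_general (hI : CommonIndep M₁ M₂ I) :
    (∀ J : Finset α, CommonIndep M₁ M₂ J → J.card ≤ I.card) ↔
      ¬ ∃ (l : List α) (h : l ≠ []),
          l.IsChain (ExchAdj M₁ M₂ I) ∧ l.Nodup ∧
          memX M₁ I (l.head h) ∧ memX M₂ I (l.getLast h) := by
  constructor
  · rintro hmax ⟨l, hne, hchain, -, hsource, htarget⟩
    obtain ⟨p, hp : IsShortestAugmentingPath M₁ M₂ I p⟩ :=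
      (IsWalkBetween.mk hne hchain hsource htarget).exists_isShortestWalk
    exact (hmax _ (hp.commonIndep_symmDiff hI)).not_gt (hp.indep_symmDiff_and_card_lt hI.1).2
  · refine fun hno J hJ => card_le_card_of_no_walk hI hJ fun ⟨l, hl⟩ => hno ?_
    obtain ⟨p, hp⟩ := hl.exists_isShortestWalk
    exact ⟨p, hp.isWalkBetween.ne_nil, hp.isWalkBetween.isChain, hp.nodup,
      hp.isWalkBetween.source, hp.isWalkBetween.target⟩

end ExchangeGraph

/-- A common independent set `I` of matroids `M₁`, `M₂` on a common finite ground set has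
maximum cardinality among all common independent sets iff there is no directed path from a
vertex of `X₁` to a vertex of `X₂` in the exchange graph `𝓔(M₁,M₂,I)`. -/
theorem maxCard_iff_no_X1X2_path {α : Type*} [Fintype α] [DecidableEq α]
    (M₁ M₂ : Matroid α) (hE₁ : M₁.E = Set.univ) (hE₂ : M₂.E = Set.univ)
    (I : Finset α) (hI : CommonIndep M₁ M₂ I) :
    (∀ J : Finset α, CommonIndep M₁ M₂ J → J.card ≤ I.card) ↔
      ¬ ∃ (l : List α) (h : l ≠ []),
          l.Chain' (ExchAdj M₁ M₂ I) ∧ l.Nodup ∧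
          memX M₁ I (l.head h) ∧ memX M₂ I (l.getLast h) :=
  maxCard_iff_no_X1X2_path_general hI
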